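/- Let 𝒜, 𝒞 ⊆ ℕ be coprime to each other, i.e. gcd(a,c) = 1 for all a ∈ 𝒜 and c ∈ 𝒞. Then δ(M_𝒜 ∩ M_𝒞) = δ(M_𝒜)·δ(M_𝒞), where all three logarithmic densities exist. -/

import Mathlib

open Filter Set Topology MeasureTheory

open scoped Classical

noncomputable section

/-- The set of multiples `M_B ⊆ ℤ` of a set `B ⊆ ℕ`. -/
def multiplesZ (B : Set ℕ) : Set ℤ := {n : ℤ | ∃ b ∈ B, (b : ℤ) ∣ n}

/-- The `B`-free integers `F_B = ℤ ∖ M_B`. -/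
def freeZ (B : Set ℕ) : Set ℤ := (multiplesZ B)ᶜ

/-- The logarithmically weighted averages `(1/log n) ∑_{k=1}^n 1_A(k)/k`. -/
def logWeight (A : Set ℤ) (n : ℕ) : ℝ :=
  (Real.log n)⁻¹ * ∑ k ∈ Finset.Icc 1 n, A.indicator (fun m : ℤ => ((m : ℝ))⁻¹) (k : ℤ)

/-- The lower logarithmic density of a set `A ⊆ ℤ`. -/
def logDensLow (A : Set ℤ) : ℝ := liminf (logWeight A) atTop

/-- `A ⊆ ℤ` has logarithmic density `d`. -/
def HasLogDensity (A : Set ℤ) (d : ℝ) : Prop := Tendsto (logWeight A) atTop (𝓝 d)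

/-- `B` is primitive: no element divides another one. -/
def Primitive (B : Set ℕ) : Prop := ∀ b ∈ B, ∀ b' ∈ B, b ∣ b' → b = b'

/-- `B` is Behrend: its set of multiples has logarithmic density one. -/
def IsBehrend (B : Set ℕ) : Prop := logDensLow (multiplesZ B) = 1

/-- `B` is taut: removing any element strictly decreases the logarithmic density
of the set of multiples. -/
def IsTaut (B : Set ℕ) : Prop :=
  ∀ b ∈ B, logDensLow (multiplesZ (B \ {b})) < logDensLow (multiplesZ B)

/-- `B̃^(N)`: the elements of `B` having no prime factor `≤ N`. -/
def Btilde (B : Set ℕ) (N : ℕ) : Set ℕ := {b ∈ B | ∀ p : ℕ, p.Prime → p ∣ b → N < p}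

/-- `B^(N)`: the elements of `B` all of whose prime factors are `≤ N`. -/
def Bsmooth (B : Set ℕ) (N : ℕ) : Set ℕ := {b ∈ B | ∀ p : ℕ, p.Prime → p ∣ b → p ≤ N}

open ProbabilityTheory

/-!
Under the zeta distribution `μ_s`, which gives mass `k ^ (-s) / ζ(s)` to `k`, divisibility by `a`
and divisibility by `c` are independent events for coprime `a` and `c`; as divisibility events form
π-systems, `M_A` and `M_C` are independent. It remains to see that the logarithmic density of a set
of multiples `M_B` exists and is the limit of `μ_s(M_B)` as `s` decreases to `1`.

The latter limit exists because `μ_s(M_B)` is antitone in `s`: writing `k ^ (t - s)` as the sum of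
Jordan's totient over the divisors of `k`, the density of `μ_s` relative to `μ_t` is a nonnegative
combination of divisibility indicators, each positively correlated with `M_B`. For finite `B`,
inclusion-exclusion shows that both limits agree. In general, let `d` be the limit of `μ_s(M_B)`,
let `B'` be a finite part of `B`, and let `d'` be the density of `M_B'`. Monotonicity gives
`μ_s(M_B') ≤ d' ≤ d`, so `d'` tends to `d` as `B'` exhausts `B`. Since `1 / k ≤ e * k ^ (-s)` for
`k ≤ n` and `s = 1 + 1 / log n`, and since `(s - 1) * ζ(s)` tends to `1`, the upper logarithmic
density of `M_B ∖ M_B'` is at most `e * (d - d')`, and hence `M_B` has logarithmic density `d`.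
-/

/-! ### Sets of multiples -/

lemma mem_multiplesZ_singleton {d : ℕ} {n : ℤ} : n ∈ multiplesZ {d} ↔ (d : ℤ) ∣ n := by
  simp [multiplesZ]

lemma mul_mem_multiplesZ {B : Set ℕ} {n : ℤ} (hn : n ∈ multiplesZ B) (m : ℤ) :
    m * n ∈ multiplesZ B :=
  let ⟨b, hb, hbn⟩ := hn
  ⟨b, hb, hbn.mul_left m⟩

lemma multiplesZ_mono {A B : Set ℕ} (h : A ⊆ B) : multiplesZ A ⊆ multiplesZ B :=
  fun _ ⟨a, ha, han⟩ ↦ ⟨a, h ha, han⟩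

lemma multiplesZ_iUnion {ι : Sort*} (B : ι → Set ℕ) :
    multiplesZ (⋃ i, B i) = ⋃ i, multiplesZ (B i) := by
  ext n
  simp only [multiplesZ, mem_iUnion, mem_ofPred_eq]
  tauto

lemma multiplesZ_eq_biUnion_singleton (B : Set ℕ) :
    multiplesZ B = ⋃ b ∈ B, multiplesZ {b} := by
  simp only [← multiplesZ_iUnion, biUnion_of_singleton]

lemma biInter_multiplesZ_singleton (t : Finset ℕ) :
    ⋂ b ∈ t, multiplesZ {b} = multiplesZ {t.lcm id} := by
  ext n
  simp only [mem_iInter, mem_multiplesZ_singleton, Int.natCast_dvd, Finset.lcm_dvd_iff, id]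

lemma multiplesZ_singleton_inter (a b : ℕ) :
    multiplesZ {a} ∩ multiplesZ {b} = multiplesZ {a.lcm b} := by
  ext n
  simp only [mem_inter_iff, mem_multiplesZ_singleton, Int.natCast_dvd, Nat.lcm_dvd_iff]

lemma multiplesZ_inter_of_coprime {A C : Set ℕ} (hcop : ∀ a ∈ A, ∀ c ∈ C, a.Coprime c) :
    multiplesZ A ∩ multiplesZ C = multiplesZ (image2 (· * ·) A C) := by
  ext n
  constructor
  · rintro ⟨⟨a, ha, han⟩, c, hc, hcn⟩
    refine ⟨a * c, mem_image2_of_mem ha hc, ?_⟩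
    rw [Int.natCast_dvd] at han hcn ⊢
    exact (hcop a ha c hc).mul_dvd_of_dvd_of_dvd han hcn
  · rintro ⟨_, ⟨a, ha, c, hc, rfl⟩, hacn⟩
    push_cast at hacn
    exact ⟨⟨a, ha, dvd_of_mul_right_dvd hacn⟩, c, hc, dvd_of_mul_left_dvd hacn⟩

/-- The events of divisibility by the elements coprime to `C`, and by the elements coprime to all
of those, form two independent π-systems. -/
theorem indepSet_multiplesZ {μ : Measure ℤ} [IsZeroOrProbabilityMeasure μ]
    (hμ : ∀ d e : ℕ, d.Coprime e → μ (multiplesZ {d * e}) = μ (multiplesZ {d}) * μ (multiplesZ {e}))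
    {A C : Set ℕ} (hcop : ∀ a ∈ A, ∀ c ∈ C, a.Coprime c) :
    IndepSet (multiplesZ A) (multiplesZ C) μ := by
  let divisibilityEvents (D : Set ℕ) : Set (Set ℤ) := (fun d ↦ multiplesZ {d}) '' D
  let coprimeTo (E : Set ℕ) : Set ℕ := {d | ∀ e ∈ E, d.Coprime e}
  have isPiSystem (E : Set ℕ) : IsPiSystem (divisibilityEvents (coprimeTo E)) := by
    rintro _ ⟨d, hd, rfl⟩ _ ⟨d', hd', rfl⟩ -
    refine ⟨d.lcm d', fun e he ↦ ?_, (multiplesZ_singleton_inter d d').symm⟩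
    exact ((hd e he).mul_left (hd' e he)).coprime_dvd_left (Nat.lcm_dvd_mul d d')
  have measurableSet {D E : Set ℕ} (h : D ⊆ E) :
      MeasurableSet[.generateFrom (divisibilityEvents E)] (multiplesZ D) := by
    rw [multiplesZ_eq_biUnion_singleton]
    exact .biUnion D.to_countable fun d hd ↦ .basic _ ⟨d, h hd, rfl⟩
  have indepSets : IndepSets (divisibilityEvents (coprimeTo C))
      (divisibilityEvents (coprimeTo (coprimeTo C))) μ := by
    rw [IndepSets_iff]
    rintro _ _ ⟨d, hd, rfl⟩ ⟨e, he, rfl⟩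
    have hde : d.Coprime e := (he d hd).symm
    rw [multiplesZ_singleton_inter, hde.lcm_eq_mul, hμ d e hde]
  refine (indepSets.indep' (fun _ _ ↦ .of_discrete) (fun _ _ ↦ .of_discrete)
    (isPiSystem _) (isPiSystem _)).indepSet_of_measurableSet (measurableSet hcop) (measurableSet ?_)
  exact fun c hc d hd ↦ (hd c hc).symm

/-- The inclusion-exclusion formula for the density of the set of multiples of a finite set. -/
def finiteMultiplesDensity (B : Finset ℕ) : ℝ :=
  ∑ t ∈ B.powerset with t.Nonempty, (-1) ^ (t.card + 1) * ((t.lcm id : ℕ) : ℝ)⁻¹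

lemma tendsto_measureReal_multiplesZ_finset {ι : Type*} {l : Filter ι} {μ : ι → Measure ℤ}
    [∀ i, IsFiniteMeasure (μ i)]
    (hμ : ∀ d : ℕ, Tendsto (fun i ↦ (μ i).real (multiplesZ {d})) l (𝓝 (d : ℝ)⁻¹))
    (B : Finset ℕ) :
    Tendsto (fun i ↦ (μ i).real (multiplesZ B)) l (𝓝 (finiteMultiplesDensity B)) := by
  have inclusion_exclusion (i : ι) : (μ i).real (multiplesZ B) =
      ∑ t ∈ B.powerset with t.Nonempty,
        (-1) ^ (t.card + 1) * (μ i).real (multiplesZ {t.lcm id}) := by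
    simp only [← biInter_multiplesZ_singleton]
    rw [multiplesZ_eq_biUnion_singleton]
    exact measureReal_biUnion_eq_sum_powerset fun _ _ ↦ .of_discrete
  simp only [inclusion_exclusion]
  exact tendsto_finsetSum _ fun t _ ↦ (hμ _).const_mul _

/-! ### The zeta distribution -/

/-- The unnormalised zeta distribution on `ℤ`, with mass `k ^ (-s)` at each `k ≥ 1`. -/
def dirichletMeasure (s : ℝ) : Measure ℤ :=
  .sum fun k : ℕ+ ↦ ENNReal.ofReal ((k : ℝ) ^ (-s)) • .dirac (k : ℤ)

/-- The zeta distribution, giving mass `k ^ (-s) / ζ(s)` to each `k ≥ 1`. For `s ≤ 1`, where the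
total mass of `dirichletMeasure s` is infinite, it is the zero measure. -/
def zetaMeasure (s : ℝ) : Measure ℤ := (dirichletMeasure s)[|univ]

instance (s : ℝ) : IsZeroOrProbabilityMeasure (zetaMeasure s) := by
  unfold zetaMeasure
  infer_instance

lemma dirichletMeasure_apply (s : ℝ) (S : Set ℤ) :
    dirichletMeasure s S =
      ∑' k : ℕ+, S.indicator (fun n ↦ ENNReal.ofReal ((n : ℝ) ^ (-s))) (k : ℤ) := by
  simp [dirichletMeasure, Measure.sum_apply, indicator]

lemma dirichletMeasure_univ {s : ℝ} (hs : 1 < s) :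
    dirichletMeasure s univ = ENNReal.ofReal (∑' n : ℕ, 1 / (n : ℝ) ^ s) := by
  have hsum : Summable fun n : ℕ ↦ 1 / (n : ℝ) ^ s := Real.summable_one_div_nat_rpow.2 hs
  rw [← tsum_zero_pnat_eq_tsum_nat hsum, ENNReal.ofReal_add (by positivity)
    (tsum_nonneg fun _ ↦ by positivity), ENNReal.ofReal_tsum_of_nonneg (fun _ ↦ by positivity)
    (summable_pnat_iff_summable_nat.2 hsum), dirichletMeasure_apply]
  simp [Real.zero_rpow (by linarith : s ≠ 0), Real.rpow_neg]

lemma dirichletMeasure_univ_ne_zero (s : ℝ) : dirichletMeasure s univ ≠ 0 := fun h ↦ by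
  simpa [dirichletMeasure_apply] using
    ENNReal.tsum_eq_zero.1 ((dirichletMeasure_apply s univ).symm.trans h) 1

lemma isFiniteMeasure_dirichletMeasure {s : ℝ} (hs : 1 < s) :
    IsFiniteMeasure (dirichletMeasure s) :=
  ⟨dirichletMeasure_univ hs ▸ ENNReal.ofReal_lt_top⟩

lemma dirichletMeasure_real_univ {s : ℝ} (hs : 1 < s) :
    (dirichletMeasure s).real univ = ∑' n : ℕ, 1 / (n : ℝ) ^ s := by
  rw [measureReal_def, dirichletMeasure_univ hs,
    ENNReal.toReal_ofReal (tsum_nonneg fun _ ↦ by positivity)]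

lemma dirichletMeasure_real_singleton (s : ℝ) {k : ℕ} (hk : 0 < k) :
    (dirichletMeasure s).real {(k : ℤ)} = (k : ℝ) ^ (-s) := by
  rw [measureReal_def, dirichletMeasure_apply, tsum_eq_single ⟨k, hk⟩]
  · simp [ENNReal.toReal_ofReal (Real.rpow_nonneg k.cast_nonneg _)]
  · intro l hl
    refine indicator_of_notMem (fun h ↦ hl (PNat.eq ?_)) _
    exact Int.natCast_inj.1 h

lemma zetaMeasure_apply (s : ℝ) (S : Set ℤ) :
    zetaMeasure s S = dirichletMeasure s S / dirichletMeasure s univ := by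
  rw [zetaMeasure, cond_apply .univ, univ_inter, mul_comm, div_eq_mul_inv]

lemma dirichletMeasure_inter_multiplesZ_singleton {s : ℝ} (hs : s ≠ 0) (S : Set ℤ) (d : ℕ) :
    dirichletMeasure s (S ∩ multiplesZ {d}) =
      ENNReal.ofReal ((d : ℝ) ^ (-s)) * dirichletMeasure s {n | d * n ∈ S} := by
  rw [dirichletMeasure_apply, dirichletMeasure_apply, ← ENNReal.tsum_mul_left]
  rcases d.eq_zero_or_pos with rfl | hd
  · simp [Real.zero_rpow (neg_ne_zero.2 hs), indicator, mem_multiplesZ_singleton]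
  lift d to ℕ+ using hd
  rw [← (mul_right_injective d).tsum_eq]
  · refine tsum_congr fun k ↦ ?_
    by_cases hk : (d : ℤ) * k ∈ S
    · simp [hk, mem_multiplesZ_singleton, indicator, Real.mul_rpow, ENNReal.ofReal_mul,
        Real.rpow_nonneg]
    · simp [hk]
  · intro k hk
    have hdk : ((d : ℕ) : ℤ) ∣ (k : ℕ) := mem_multiplesZ_singleton.1 (mem_of_indicator_ne_zero hk).2
    obtain ⟨m, rfl⟩ := PNat.dvd_iff.2 (Int.natCast_dvd_natCast.1 hdk)
    exact mem_range_self m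

lemma zetaMeasure_multiplesZ_singleton {s : ℝ} (hs : 1 < s) (d : ℕ) :
    zetaMeasure s (multiplesZ {d}) = ENNReal.ofReal ((d : ℝ) ^ (-s)) := by
  have := isFiniteMeasure_dirichletMeasure hs
  have h := dirichletMeasure_inter_multiplesZ_singleton (by linarith : s ≠ 0) univ d
  rw [univ_inter] at h
  rw [zetaMeasure_apply, h]
  simp [mul_div_assoc, ENNReal.div_self (dirichletMeasure_univ_ne_zero s)]

theorem indepSet_multiplesZ_zetaMeasure {s : ℝ} (hs : 1 < s) {A C : Set ℕ}
    (hcop : ∀ a ∈ A, ∀ c ∈ C, a.Coprime c) :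
    IndepSet (multiplesZ A) (multiplesZ C) (zetaMeasure s) := by
  refine indepSet_multiplesZ (fun d e _ ↦ ?_) hcop
  simp only [zetaMeasure_multiplesZ_singleton hs]
  rw [← ENNReal.ofReal_mul (by positivity), Nat.cast_mul,
    Real.mul_rpow d.cast_nonneg e.cast_nonneg]

lemma tendsto_zetaMeasure_multiplesZ_finset (B : Finset ℕ) :
    Tendsto (fun s ↦ (zetaMeasure s).real (multiplesZ B)) (𝓝[>] 1)
      (𝓝 (finiteMultiplesDensity B)) := by
  refine tendsto_measureReal_multiplesZ_finset (fun d ↦ ?_) B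
  have h : Tendsto (fun s : ℝ ↦ (d : ℝ) ^ (-s)) (𝓝[>] 1) (𝓝 ((d : ℝ) ^ (-1 : ℝ))) :=
    (Real.continuousAt_const_rpow' (by norm_num)).tendsto.comp
      (tendsto_neg (1 : ℝ) |>.mono_left nhdsWithin_le_nhds)
  rw [Real.rpow_neg_one] at h
  refine h.congr' ?_
  filter_upwards [self_mem_nhdsWithin] with s hs
  rw [measureReal_def, zetaMeasure_multiplesZ_singleton hs, ENNReal.toReal_ofReal (by positivity)]

/-! ### Monotonicity in the exponent -/

/-- The power function `n ↦ n ^ u` as an arithmetic function, with value `0` at `n = 0`. -/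
def rpowArith (u : ℝ) : ArithmeticFunction ℝ :=
  ⟨fun n ↦ if n = 0 then 0 else (n : ℝ) ^ u, if_pos rfl⟩

/-- Jordan's totient `n ^ u * ∏ p ∣ n, (1 - p ^ (-u))` with a real exponent `u`. -/
def jordanTotient (u : ℝ) : ArithmeticFunction ℝ :=
  (rpowArith u).pmul (.prodPrimeFactors fun p ↦ 1 - (p : ℝ) ^ (-u))

lemma rpowArith_apply (u : ℝ) {n : ℕ} (hn : n ≠ 0) : rpowArith u n = (n : ℝ) ^ u := if_neg hn

lemma isMultiplicative_rpowArith (u : ℝ) : (rpowArith u).IsMultiplicative := by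
  refine ArithmeticFunction.IsMultiplicative.iff_ne_zero.2 ⟨by simp [rpowArith], ?_⟩
  intro m n hm hn _
  rw [rpowArith_apply u hm, rpowArith_apply u hn, rpowArith_apply u (mul_ne_zero hm hn),
    Nat.cast_mul, Real.mul_rpow m.cast_nonneg n.cast_nonneg]

lemma isMultiplicative_jordanTotient (u : ℝ) : (jordanTotient u).IsMultiplicative :=
  (isMultiplicative_rpowArith u).pmul (.prodPrimeFactors _)

lemma jordanTotient_nonneg {u : ℝ} (hu : 0 ≤ u) (n : ℕ) : 0 ≤ jordanTotient u n := by
  rcases eq_or_ne n 0 with rfl | hn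
  · simp
  rw [jordanTotient, ArithmeticFunction.pmul_apply, rpowArith_apply u hn,
    ArithmeticFunction.prodPrimeFactors_apply hn]
  refine mul_nonneg (by positivity) (Finset.prod_nonneg fun p hp ↦ sub_nonneg.2 ?_)
  have one_le_p : (1 : ℝ) ≤ p := mod_cast (Nat.prime_of_mem_primeFactors hp).one_le
  exact Real.rpow_le_one_of_one_le_of_nonpos one_le_p (neg_nonpos.2 hu)

lemma jordanTotient_prime_pow_succ (u : ℝ) {p : ℕ} (hp : p.Prime) (k : ℕ) :
    jordanTotient u (p ^ (k + 1)) = rpowArith u (p ^ (k + 1)) - rpowArith u (p ^ k) := by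
  have hp0 : (0 : ℝ) < p := mod_cast hp.pos
  have hpk (i : ℕ) : p ^ i ≠ 0 := pow_ne_zero i hp.ne_zero
  rw [jordanTotient, ArithmeticFunction.pmul_apply, ArithmeticFunction.prodPrimeFactors_apply
    (hpk _), Nat.primeFactors_prime_pow k.succ_ne_zero hp, Finset.prod_singleton,
    rpowArith_apply u (hpk _), rpowArith_apply u (hpk _), pow_succ, Nat.cast_mul,
    Real.mul_rpow (by positivity) hp0.le, Real.rpow_neg hp0.le]
  field_simp

lemma sum_divisors_jordanTotient (u : ℝ) {n : ℕ} (hn : n ≠ 0) :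
    ∑ d ∈ n.divisors, jordanTotient u d = (n : ℝ) ^ u := by
  have zeta_mul : (ArithmeticFunction.zeta : ArithmeticFunction ℝ) * jordanTotient u =
      rpowArith u := by
    refine (ArithmeticFunction.IsMultiplicative.eq_iff_eq_on_prime_powers _
      (ArithmeticFunction.isMultiplicative_zeta.natCast.mul (isMultiplicative_jordanTotient u)) _
      (isMultiplicative_rpowArith u)).2 fun p k hp ↦ ?_
    rw [ArithmeticFunction.coe_zeta_mul_apply, Nat.sum_divisors_prime_pow hp,
      Finset.sum_range_succ']
    simp only [jordanTotient_prime_pow_succ u hp]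
    rw [Finset.sum_range_sub (fun i ↦ rpowArith u (p ^ i)), pow_zero,
      (isMultiplicative_jordanTotient u).map_one, (isMultiplicative_rpowArith u).map_one,
      sub_add_cancel]
  rw [← ArithmeticFunction.coe_zeta_mul_apply, zeta_mul, rpowArith_apply u hn]

lemma ofReal_rpow_neg_eq_tsum_jordanTotient {s t : ℝ} (hst : s ≤ t) (k : ℕ+) :
    ENNReal.ofReal ((k : ℝ) ^ (-s)) = ∑' d : ℕ, ENNReal.ofReal (jordanTotient (t - s) d) *
      (multiplesZ {d}).indicator (fun n ↦ ENNReal.ofReal ((n : ℝ) ^ (-t))) (k : ℤ) := by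
  have hk : (0 : ℝ) < k := mod_cast k.pos
  rw [tsum_eq_sum (s := (k : ℕ).divisors)]
  · have on_divisors : ∀ d ∈ (k : ℕ).divisors,
        (multiplesZ {d}).indicator (fun n ↦ ENNReal.ofReal ((n : ℝ) ^ (-t))) (k : ℤ) =
          ENNReal.ofReal ((k : ℝ) ^ (-t)) := fun d hd ↦ by
      rw [indicator_of_mem (mem_multiplesZ_singleton.2
        (Int.natCast_dvd_natCast.2 (Nat.dvd_of_mem_divisors hd))), Int.cast_natCast]
    rw [Finset.sum_congr rfl fun d hd ↦ by rw [on_divisors d hd], ← Finset.sum_mul,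
      ← ENNReal.ofReal_sum_of_nonneg fun d _ ↦ jordanTotient_nonneg (sub_nonneg.2 hst) d,
      sum_divisors_jordanTotient _ k.ne_zero, ← ENNReal.ofReal_mul (by positivity),
      ← Real.rpow_add hk]
    congr 2
    ring
  · intro d hd
    rw [indicator_of_notMem, mul_zero]
    rw [mem_multiplesZ_singleton, Int.natCast_dvd_natCast]
    exact fun h ↦ hd (Nat.mem_divisors.2 ⟨h, k.ne_zero⟩)

lemma dirichletMeasure_eq_tsum_jordanTotient {s t : ℝ} (hst : s ≤ t) (S : Set ℤ) :
    dirichletMeasure s S = ∑' d : ℕ, ENNReal.ofReal (jordanTotient (t - s) d) *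
      dirichletMeasure t (S ∩ multiplesZ {d}) := by
  simp only [dirichletMeasure_apply, ← ENNReal.tsum_mul_left]
  rw [ENNReal.tsum_comm]
  refine tsum_congr fun k ↦ ?_
  by_cases hk : (k : ℤ) ∈ S
  · rw [indicator_of_mem hk, Int.cast_natCast, ofReal_rpow_neg_eq_tsum_jordanTotient hst]
    simp [← indicator_indicator, hk]
  · simp [hk]

/-- Conditioning a set of multiples on divisibility by `d` can only increase its probability, and
`n ^ (t - s)` is a nonnegative combination of divisibility indicators. -/
lemma dirichletMeasure_mul_univ_le {s t : ℝ} (hst : s ≤ t) (ht : t ≠ 0) (B : Set ℕ) :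
    dirichletMeasure t (multiplesZ B) * dirichletMeasure s univ ≤
      dirichletMeasure s (multiplesZ B) * dirichletMeasure t univ := by
  rw [dirichletMeasure_eq_tsum_jordanTotient hst, dirichletMeasure_eq_tsum_jordanTotient hst,
    ← ENNReal.tsum_mul_left, ← ENNReal.tsum_mul_right]
  refine ENNReal.tsum_le_tsum fun d ↦ ?_
  simp only [dirichletMeasure_inter_multiplesZ_singleton ht, mem_univ]
  have dilate_subset : dirichletMeasure t (multiplesZ B) ≤
      dirichletMeasure t {n | d * n ∈ multiplesZ B} :=
    measure_mono fun n hn ↦ mul_mem_multiplesZ hn d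
  calc _ = ENNReal.ofReal (jordanTotient (t - s) d) * (ENNReal.ofReal ((d : ℝ) ^ (-t)) *
        dirichletMeasure t (multiplesZ B)) * dirichletMeasure t univ := by
        rw [ofPred_true]
        ring
    _ ≤ _ := by gcongr

theorem antitoneOn_zetaMeasure_multiplesZ (B : Set ℕ) :
    AntitoneOn (fun s ↦ (zetaMeasure s).real (multiplesZ B)) (Ioi 1) := by
  intro s hs t ht hst
  have := isFiniteMeasure_dirichletMeasure hs
  have := isFiniteMeasure_dirichletMeasure ht
  refine ENNReal.toReal_mono (by finiteness) ?_
  rw [zetaMeasure_apply, zetaMeasure_apply, ENNReal.div_le_iff (dirichletMeasure_univ_ne_zero t)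
    (by finiteness), ← ENNReal.mul_div_right_comm, ENNReal.le_div_iff_mul_le
    (.inl (dirichletMeasure_univ_ne_zero s)) (.inl (by finiteness))]
  exact dirichletMeasure_mul_univ_le hst (zero_lt_one.trans ht).ne' B

/-! ### Logarithmic density -/

/-- The logarithmic averages of `logWeight` as a measure on `ℤ`, with mass `1 / (k * log n)` at
each `k` with `1 ≤ k ≤ n`. -/
def logMeasure (n : ℕ) : Measure ℤ :=
  ∑ k ∈ Finset.Icc 1 n, ENNReal.ofReal ((Real.log n)⁻¹ * (k : ℝ)⁻¹) • .dirac (k : ℤ)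

instance (n : ℕ) : IsFiniteMeasure (logMeasure n) :=
  ⟨by simp [logMeasure, ENNReal.sum_lt_top]⟩

lemma logMeasure_real (n : ℕ) (S : Set ℤ) : (logMeasure n).real S = logWeight S n := by
  have mass_nonneg (k : ℕ) : 0 ≤ (Real.log n)⁻¹ * (k : ℝ)⁻¹ :=
    mul_nonneg (inv_nonneg.2 (Real.log_natCast_nonneg n)) (by positivity)
  rw [measureReal_def, logMeasure, Measure.finsetSum_apply, ENNReal.toReal_sum, logWeight,
    Finset.mul_sum]
  · refine Finset.sum_congr rfl fun k _ ↦ ?_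
    by_cases hk : (k : ℤ) ∈ S <;> simp [hk, ENNReal.toReal_ofReal (mass_nonneg k)]
  · exact fun k _ ↦ ENNReal.mul_ne_top ENNReal.ofReal_ne_top (measure_ne_top _ S)

lemma logWeight_mono {S T : Set ℤ} (h : S ⊆ T) (n : ℕ) : logWeight S n ≤ logWeight T n := by
  simpa only [logMeasure_real] using measureReal_mono (μ := logMeasure n) h

lemma logWeight_eq_add_sdiff {S T : Set ℤ} (h : S ⊆ T) (n : ℕ) :
    logWeight T n = logWeight S n + logWeight (T \ S) n := by
  simp only [← logMeasure_real]
  rw [measureReal_sdiff h .of_discrete, add_sub_cancel]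

lemma logWeight_multiplesZ_singleton (n : ℕ) {d : ℕ} (hd : 0 < d) :
    logWeight (multiplesZ {d}) n = (d : ℝ)⁻¹ * ((Real.log n)⁻¹ * harmonic (n / d)) := by
  have multiples_eq : {k ∈ Finset.Icc 1 n | d ∣ k} = (Finset.Icc 1 (n / d)).image (· * d) := by
    ext k
    simp only [Finset.mem_filter, Finset.mem_Icc, Finset.mem_image]
    constructor
    · rintro ⟨⟨hk, hkn⟩, hdk⟩
      obtain ⟨m, rfl⟩ := dvd_iff_exists_eq_mul_left.1 hdk
      exact ⟨m, ⟨Nat.pos_of_mul_pos_right hk, (Nat.le_div_iff_mul_le hd).2 hkn⟩, rfl⟩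
    · rintro ⟨m, ⟨hm, hmn⟩, rfl⟩
      exact ⟨⟨Nat.mul_pos hm hd, (Nat.le_div_iff_mul_le hd).1 hmn⟩, dvd_mul_left d m⟩
  simp only [logWeight, indicator, mem_multiplesZ_singleton, Int.natCast_dvd_natCast,
    Int.cast_natCast]
  rw [← Finset.sum_filter, multiples_eq, Finset.sum_image (mul_left_injective₀ hd.ne').injOn,
    harmonic_eq_sum_Icc]
  push_cast
  simp only [mul_inv_rev, Finset.mul_sum, mul_left_comm]

lemma tendsto_inv_log_natCast : Tendsto (fun n : ℕ ↦ (Real.log n)⁻¹) atTop (𝓝[>] 0) :=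
  tendsto_inv_atTop_nhdsGT_zero.comp (Real.tendsto_log_atTop.comp tendsto_natCast_atTop_atTop)

lemma tendsto_inv_log_mul_add_log_div {d : ℝ} (hd : d ≠ 0) (c : ℝ) :
    Tendsto (fun n : ℕ ↦ (Real.log n)⁻¹ * (c + Real.log (n / d))) atTop (𝓝 1) := by
  have h := ((tendsto_inv_log_natCast.mono_right nhdsWithin_le_nhds).mul_const
    (c - Real.log d)).add_const 1
  rw [zero_mul, zero_add] at h
  refine h.congr' ?_
  filter_upwards [eventually_gt_atTop 1] with n hn
  have log_ne : Real.log n ≠ 0 := (Real.log_pos (mod_cast hn)).ne'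
  rw [Real.log_div (by positivity) hd]
  field_simp
  ring

lemma hasLogDensity_multiplesZ_singleton (d : ℕ) : HasLogDensity (multiplesZ {d}) (d : ℝ)⁻¹ := by
  rcases d.eq_zero_or_pos with rfl | hd
  · have logWeight_zero (n : ℕ) : logWeight (multiplesZ {0}) n = 0 := by
      refine mul_eq_zero_of_right _ (Finset.sum_eq_zero fun k hk ↦ indicator_of_notMem ?_ _)
      simpa [mem_multiplesZ_singleton] using Nat.one_le_iff_ne_zero.1 (Finset.mem_Icc.1 hk).1
    simp [HasLogDensity, funext logWeight_zero]
  have hd0 : (0 : ℝ) < d := mod_cast hd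
  have bound_tendsto (c : ℝ) : Tendsto
      (fun n : ℕ ↦ (d : ℝ)⁻¹ * ((Real.log n)⁻¹ * (c + Real.log (n / d)))) atTop (𝓝 (d : ℝ)⁻¹) := by
    simpa using (tendsto_inv_log_mul_add_log_div hd0.ne' c).const_mul (d : ℝ)⁻¹
  refine tendsto_of_tendsto_of_tendsto_of_le_of_le' (bound_tendsto 0) (bound_tendsto 1) ?_ ?_
  · refine .of_forall fun n ↦ ?_
    rw [logWeight_multiplesZ_singleton n hd, zero_add]
    have := Real.log_natCast_nonneg n
    gcongr
    simpa [Nat.floor_div_natCast] using log_le_harmonic_floor ((n : ℝ) / d) (by positivity)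
  · filter_upwards [eventually_ge_atTop d] with n hn
    rw [logWeight_multiplesZ_singleton n hd]
    have := Real.log_natCast_nonneg n
    gcongr
    have one_le : 1 ≤ (n : ℝ) / d := (one_le_div hd0).2 (mod_cast hn)
    simpa [Nat.floor_div_natCast] using harmonic_floor_le_one_add_log _ one_le

lemma hasLogDensity_multiplesZ_finset (B : Finset ℕ) :
    HasLogDensity (multiplesZ B) (finiteMultiplesDensity B) := by
  have h := tendsto_measureReal_multiplesZ_finset (μ := logMeasure) (l := atTop) (fun d ↦ ?_) B
  · simpa only [logMeasure_real, HasLogDensity] using h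
  · simpa only [logMeasure_real, HasLogDensity] using hasLogDensity_multiplesZ_singleton d

lemma inv_le_exp_one_mul_rpow {n k : ℕ} (hk : 0 < k) (hkn : k ≤ n) :
    (k : ℝ)⁻¹ ≤ Real.exp 1 * (k : ℝ) ^ (-(1 + (Real.log n)⁻¹)) := by
  have hk0 : (0 : ℝ) < k := mod_cast hk
  have log_le : Real.log k * (Real.log n)⁻¹ ≤ 1 :=
    mul_inv_le_one_of_le₀ (Real.log_le_log hk0 (mod_cast hkn)) (Real.log_natCast_nonneg n)
  rw [Real.rpow_def_of_pos hk0, ← Real.exp_add, ← Real.exp_log (inv_pos.2 hk0), Real.log_inv]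
  exact Real.exp_le_exp.2 (by linarith)

lemma logWeight_le_dirichletMeasure {n : ℕ} (hn : 1 < n) (S : Set ℤ) :
    logWeight S n ≤ (Real.log n)⁻¹ *
      (Real.exp 1 * (dirichletMeasure (1 + (Real.log n)⁻¹)).real S) := by
  have log_pos : 0 < Real.log n := Real.log_pos (mod_cast hn)
  set s := 1 + (Real.log n)⁻¹
  have := isFiniteMeasure_dirichletMeasure (s := s) (lt_add_of_pos_right 1 (inv_pos.2 log_pos))
  let F : Finset ℕ := {k ∈ Finset.Icc 1 n | (k : ℤ) ∈ S}
  have subset : ((F.map Nat.castEmbedding : Finset ℤ) : Set ℤ) ⊆ S := by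
    intro m hm
    obtain ⟨k, hk, rfl⟩ := Finset.mem_map.1 hm
    exact (Finset.mem_filter.1 hk).2
  rw [logWeight]
  gcongr
  calc ∑ k ∈ Finset.Icc 1 n, S.indicator (fun m ↦ (m : ℝ)⁻¹) (k : ℤ)
      = ∑ k ∈ F, (k : ℝ)⁻¹ := by simp only [indicator, Finset.sum_filter, F, Int.cast_natCast]
    _ ≤ ∑ k ∈ F, Real.exp 1 * (dirichletMeasure s).real {(k : ℤ)} := by
      refine Finset.sum_le_sum fun k hk ↦ ?_
      obtain ⟨hk, hkn⟩ := Finset.mem_Icc.1 (Finset.mem_filter.1 hk).1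
      rw [dirichletMeasure_real_singleton s hk]
      exact inv_le_exp_one_mul_rpow hk hkn
    _ = Real.exp 1 * (dirichletMeasure s).real ((F.map Nat.castEmbedding : Finset ℤ) : Set ℤ) := by
      rw [← Finset.mul_sum, ← sum_measureReal_singleton, Finset.sum_map]
      rfl
    _ ≤ Real.exp 1 * (dirichletMeasure s).real S := by
      gcongr
      finiteness

lemma tendsto_one_add_inv_log : Tendsto (fun n : ℕ ↦ 1 + (Real.log n)⁻¹) atTop (𝓝[>] 1) := by
  have h := tendsto_inv_log_natCast
  rw [tendsto_nhdsWithin_iff] at h ⊢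
  refine ⟨by simpa using h.1.const_add 1, h.2.mono fun _ hn ↦ ?_⟩
  exact mem_Ioi.2 (lt_add_of_pos_right 1 (mem_Ioi.1 hn))

lemma tendsto_sub_mul_dirichletMeasure_real {S : Set ℤ} {d : ℝ}
    (hS : Tendsto (fun s ↦ (zetaMeasure s).real S) (𝓝[>] 1) (𝓝 d)) :
    Tendsto (fun s ↦ (s - 1) * (dirichletMeasure s).real S) (𝓝[>] 1) (𝓝 d) := by
  have h := tendsto_sub_mul_tsum_nat_rpow.mul hS
  rw [one_mul] at h
  refine h.congr' ?_
  filter_upwards [self_mem_nhdsWithin] with s hs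
  have := isFiniteMeasure_dirichletMeasure hs
  have hne : (dirichletMeasure s).real univ ≠ 0 :=
    (measureReal_ne_zero_iff).2 (dirichletMeasure_univ_ne_zero s)
  rw [← dirichletMeasure_real_univ hs, measureReal_def (zetaMeasure s), zetaMeasure_apply,
    ENNReal.toReal_div, ← measureReal_def, ← measureReal_def]
  field_simp

lemma eventually_logWeight_lt {S : Set ℤ} {d a : ℝ}
    (hS : Tendsto (fun s ↦ (zetaMeasure s).real S) (𝓝[>] 1) (𝓝 d)) (ha : Real.exp 1 * d < a) :
    ∀ᶠ n in atTop, logWeight S n < a := by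
  have h := ((tendsto_sub_mul_dirichletMeasure_real hS).comp tendsto_one_add_inv_log).const_mul
    (Real.exp 1)
  filter_upwards [h.eventually_lt_const ha, eventually_gt_atTop 1] with n hna hn
  refine (logWeight_le_dirichletMeasure hn S).trans_lt (lt_of_eq_of_lt ?_ hna)
  simp only [Function.comp_apply, add_sub_cancel_left]
  ring

/-! ### The Davenport–Erdős theorem -/

/-- The finite truncation `B ∩ [0, N)`. -/
def elementsBelow (B : Set ℕ) (N : ℕ) : Finset ℕ := {b ∈ Finset.range N | b ∈ B}

lemma elementsBelow_subset (B : Set ℕ) (N : ℕ) : ↑(elementsBelow B N) ⊆ B :=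
  fun _ hb ↦ (Finset.mem_filter.1 hb).2

lemma tendsto_measureReal_multiplesZ_elementsBelow (μ : Measure ℤ) [IsFiniteMeasure μ] (B : Set ℕ) :
    Tendsto (fun N ↦ μ.real (multiplesZ (elementsBelow B N))) atTop
      (𝓝 (μ.real (multiplesZ B))) := by
  have mono : Monotone fun N ↦ multiplesZ (elementsBelow B N : Set ℕ) := fun M N hMN ↦
    multiplesZ_mono (Finset.coe_subset.2 (Finset.filter_subset_filter _ (Finset.range_mono hMN)))
  have iUnion_elementsBelow : ⋃ N, (elementsBelow B N : Set ℕ) = B := by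
    refine (iUnion_subset (elementsBelow_subset B)).antisymm fun b hb ↦ mem_iUnion.2 ⟨b + 1, ?_⟩
    simpa [elementsBelow] using hb
  have h := tendsto_measure_iUnion_atTop (μ := μ) mono
  rw [← multiplesZ_iUnion, iUnion_elementsBelow] at h
  exact (ENNReal.tendsto_toReal (by finiteness)).comp h

lemma exists_tendsto_zetaMeasure_multiplesZ (B : Set ℕ) :
    ∃ d, Tendsto (fun s ↦ (zetaMeasure s).real (multiplesZ B)) (𝓝[>] 1) (𝓝 d) :=
  ⟨_, (antitoneOn_zetaMeasure_multiplesZ B).tendsto_nhdsGT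
    ⟨1, forall_mem_image.2 fun _ _ ↦ measureReal_le_one⟩⟩

lemma tendsto_finiteMultiplesDensity_elementsBelow {B : Set ℕ} {d : ℝ}
    (hB : Tendsto (fun s ↦ (zetaMeasure s).real (multiplesZ B)) (𝓝[>] 1) (𝓝 d)) :
    Tendsto (fun N ↦ finiteMultiplesDensity (elementsBelow B N)) atTop (𝓝 d) := by
  have le_d (N : ℕ) : finiteMultiplesDensity (elementsBelow B N) ≤ d :=
    le_of_tendsto_of_tendsto' (tendsto_zetaMeasure_multiplesZ_finset _) hB fun s ↦
      measureReal_mono (multiplesZ_mono (elementsBelow_subset B N))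
  have zetaMeasure_le {s : ℝ} (hs : 1 < s) (N : ℕ) :
      (zetaMeasure s).real (multiplesZ (elementsBelow B N)) ≤
        finiteMultiplesDensity (elementsBelow B N) := by
    refine ge_of_tendsto (tendsto_zetaMeasure_multiplesZ_finset _) ?_
    filter_upwards [Ioo_mem_nhdsGT hs] with t ht
    exact antitoneOn_zetaMeasure_multiplesZ _ ht.1 hs ht.2.le
  refine tendsto_order.2 ⟨fun a ha ↦ ?_, fun a ha ↦ .of_forall fun N ↦ (le_d N).trans_lt ha⟩
  obtain ⟨s, has, hs⟩ := ((hB.eventually_const_lt ha).and self_mem_nhdsWithin).exists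
  have exhaustion := tendsto_measureReal_multiplesZ_elementsBelow (zetaMeasure s) B
  filter_upwards [exhaustion.eventually_const_lt has] with N hN
  exact hN.trans_le (zetaMeasure_le hs N)

lemma tendsto_zetaMeasure_multiplesZ_sdiff_elementsBelow {B : Set ℕ} {d : ℝ}
    (hB : Tendsto (fun s ↦ (zetaMeasure s).real (multiplesZ B)) (𝓝[>] 1) (𝓝 d)) (N : ℕ) :
    Tendsto (fun s ↦ (zetaMeasure s).real (multiplesZ B \ multiplesZ (elementsBelow B N)))
      (𝓝[>] 1) (𝓝 (d - finiteMultiplesDensity (elementsBelow B N))) := by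
  refine (hB.sub (tendsto_zetaMeasure_multiplesZ_finset _)).congr fun s ↦ ?_
  exact (measureReal_sdiff (multiplesZ_mono (elementsBelow_subset B N)) .of_discrete).symm

theorem hasLogDensity_multiplesZ_of_tendsto_zetaMeasure {B : Set ℕ} {d : ℝ}
    (hB : Tendsto (fun s ↦ (zetaMeasure s).real (multiplesZ B)) (𝓝[>] 1) (𝓝 d)) :
    HasLogDensity (multiplesZ B) d := by
  have dens_tendsto := tendsto_finiteMultiplesDensity_elementsBelow hB
  refine tendsto_order.2 ⟨fun a ha ↦ ?_, fun a ha ↦ ?_⟩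
  · obtain ⟨N, hN⟩ := (dens_tendsto.eventually_const_lt ha).exists
    filter_upwards [(hasLogDensity_multiplesZ_finset _).eventually_const_lt hN] with n hn
    exact hn.trans_le (logWeight_mono (multiplesZ_mono (elementsBelow_subset B N)) n)
  · have upper_tendsto := dens_tendsto.add ((dens_tendsto.const_sub d).const_mul (Real.exp 1))
    rw [sub_self, mul_zero, add_zero] at upper_tendsto
    obtain ⟨N, hN⟩ := (upper_tendsto.eventually_lt_const ha).exists
    obtain ⟨b, hb, hba⟩ := exists_between (lt_sub_iff_add_lt'.2 hN)
    filter_upwards [(hasLogDensity_multiplesZ_finset _).eventually_lt_const (lt_sub_comm.1 hba),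
      eventually_logWeight_lt (tendsto_zetaMeasure_multiplesZ_sdiff_elementsBelow hB N) hb]
      with n hmain htail
    rw [logWeight_eq_add_sdiff (multiplesZ_mono (elementsBelow_subset B N))]
    linarith

/-- If `A` and `C` are coprime to each other, then the logarithmic densities of
`M_A`, `M_C` and `M_A ∩ M_C` all exist and `δ(M_A ∩ M_C) = δ(M_A)·δ(M_C)`. -/
theorem logDensity_inter_coprime (A C : Set ℕ) (hA0 : 0 ∉ A) (hC0 : 0 ∉ C)
    (hcop : ∀ a ∈ A, ∀ c ∈ C, Nat.Coprime a c) :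
    ∃ dA dC dAC : ℝ, HasLogDensity (multiplesZ A) dA ∧ HasLogDensity (multiplesZ C) dC ∧
      HasLogDensity (multiplesZ A ∩ multiplesZ C) dAC ∧ dAC = dA * dC := by
  obtain ⟨dA, hA⟩ := exists_tendsto_zetaMeasure_multiplesZ A
  obtain ⟨dC, hC⟩ := exists_tendsto_zetaMeasure_multiplesZ C
  have hAC : Tendsto (fun s ↦ (zetaMeasure s).real (multiplesZ A ∩ multiplesZ C)) (𝓝[>] 1)
      (𝓝 (dA * dC)) := by
    refine (hA.mul hC).congr' ?_
    filter_upwards [self_mem_nhdsWithin] with s hs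
    have independent := indepSet_multiplesZ_zetaMeasure hs hcop
    simp only [measureReal_def, independent.measure_inter_eq_mul, ENNReal.toReal_mul]
  refine ⟨dA, dC, dA * dC, hasLogDensity_multiplesZ_of_tendsto_zetaMeasure hA,
    hasLogDensity_multiplesZ_of_tendsto_zetaMeasure hC, ?_, rfl⟩
  rw [multiplesZ_inter_of_coprime hcop] at hAC ⊢
  exact hasLogDensity_multiplesZ_of_tendsto_zetaMeasure hAC
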